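/- arXiv:1706.04442 — 3 statements merged into one kernel-verified Lean document; each statement's English description precedes it below -/
import Mathlib

section
/- Let B_max ≥ 0, μ_t ∈ ℝ, and let E, p, B : ℕ → ℝ and a : ℕ → Bool satisfy: E(n) ≥ 0 and 0 ≤ p(n) ≤ B(n) for all n ≥ 1, the battery recursion B(n+1) = min(max(0, B(n) + E(n) − p(n)), B_max) for all n ≥ 1, and (1/N)·∑_{n=1}^N E(n) → μ_t as N → ∞. Then liminf_{N→∞} (1/N)·∑_{n=1}^N (if a(n) then log(1 + p(n)) else 0) ≤ log(1 + μ_t). -/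
/-- Per-sample-path form of Lemma 1(a): for a transmitter battery evolving by energy
conservation with Cesàro-mean harvesting rate `μt`, the long-term time-averaged
throughput is at most `log(1 + μt)`. -/
theorem stmt_4 (Bmax μt : ℝ) (hBmax : 0 ≤ Bmax) (E p B : ℕ → ℝ) (a : ℕ → Bool)
    (hE : ∀ n, 1 ≤ n → 0 ≤ E n)
    (hp : ∀ n, 1 ≤ n → 0 ≤ p n ∧ p n ≤ B n)
    (hrec : ∀ n, 1 ≤ n → B (n + 1) = min (max 0 (B n + E n - p n)) Bmax)
    (hconv : Filter.Tendsto
      (fun N : ℕ => (1 / (N : ℝ)) * ∑ n ∈ Finset.Icc 1 N, E n)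
      Filter.atTop (nhds μt)) :
    Filter.liminf
      (fun N : ℕ => (1 / (N : ℝ)) * ∑ n ∈ Finset.Icc 1 N,
        (if a n then Real.log (1 + p n) else 0))
      Filter.atTop ≤ Real.log (1 + μt) := by
  have hμ : 0 ≤ μt := by
    refine ge_of_tendsto' hconv fun N => ?_
    refine mul_nonneg (by positivity) (Finset.sum_nonneg fun n hn => hE n (Finset.mem_Icc.mp hn).1)
  have hm : 0 < 1 + μt := by linarith
  have henergy : ∀ N : ℕ, ∑ n ∈ Finset.Icc 1 N, p n + B (N + 1)
      ≤ B 1 + ∑ n ∈ Finset.Icc 1 N, E n := by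
    intro N
    induction N with
    | zero => simp
    | succ k ih =>
      rw [Finset.sum_Icc_succ_top (by omega), Finset.sum_Icc_succ_top (by omega)]
      have h1 := hp (k + 1) (by omega)
      have h2 := hE (k + 1) (by omega)
      have h3 : B (k + 1 + 1) ≤ B (k + 1) + E (k + 1) - p (k + 1) := by
        rw [hrec (k + 1) (by omega)]
        exact (min_le_left _ _).trans (max_le (by linarith) le_rfl)
      linarith
  have hterm : ∀ n, 1 ≤ n → (if a n then Real.log (1 + p n) else 0)
      ≤ Real.log (1 + μt) + (p n - μt) / (1 + μt) := by
    intro n hn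
    have h0 := (hp n hn).1
    have hle : Real.log (1 + p n) ≤ Real.log (1 + μt) + (p n - μt) / (1 + μt) := by
      have h := Real.log_le_sub_one_of_pos (x := (1 + p n) / (1 + μt)) (by positivity)
      rw [Real.log_div (by positivity) (by positivity)] at h
      have e : (1 + p n) / (1 + μt) - 1 = (p n - μt) / (1 + μt) := by
        field_simp
        ring
      linarith
    split_ifs
    · exact hle
    · exact (Real.log_nonneg (by linarith)).trans hle
  have hnonneg : ∀ N : ℕ, 0 ≤ (1 / (N : ℝ)) * ∑ n ∈ Finset.Icc 1 N,
        (if a n then Real.log (1 + p n) else 0) := by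
    intro N
    refine mul_nonneg (by positivity) (Finset.sum_nonneg fun n hn => ?_)
    have h0 := (hp n (Finset.mem_Icc.mp hn).1).1
    split_ifs
    · exact Real.log_nonneg (by linarith)
    · exact le_rfl
  have hlim : Filter.Tendsto (fun N : ℕ => Real.log (1 + μt) +
      ((1 / (N : ℝ)) * B 1 + (1 / (N : ℝ)) * ∑ n ∈ Finset.Icc 1 N, E n - μt) / (1 + μt))
      Filter.atTop (nhds (Real.log (1 + μt))) := by
    have h := ((((tendsto_one_div_atTop_nhds_zero_nat (𝕜 := ℝ)).mul_const (B 1)).add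
      hconv).sub_const μt).div_const (1 + μt) |>.const_add (Real.log (1 + μt))
    simpa using h
  rw [← hlim.liminf_eq]
  refine Filter.liminf_le_liminf ?_ ⟨0, ?_⟩ hlim.isCoboundedUnder_ge
  · filter_upwards [Filter.eventually_ge_atTop 1] with N hN
    have hN' : (0 : ℝ) < N := by exact_mod_cast hN
    have hs := Finset.sum_le_sum fun n (hn : n ∈ Finset.Icc 1 N) =>
      hterm n (Finset.mem_Icc.mp hn).1
    rw [Finset.sum_add_distrib, ← Finset.sum_div, Finset.sum_sub_distrib] at hs
    simp only [Finset.sum_const, Nat.card_Icc, Nat.add_sub_cancel, nsmul_eq_mul] at hs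
    have hB := henergy N
    have hBn := hp (N + 1) (by omega)
    have h2 : (∑ n ∈ Finset.Icc 1 N, p n - N * μt) / (1 + μt)
        ≤ (B 1 + ∑ n ∈ Finset.Icc 1 N, E n - N * μt) / (1 + μt) := by
      gcongr
      linarith
    calc _ ≤ (1 / (N : ℝ)) * (N * Real.log (1 + μt) +
          (B 1 + ∑ n ∈ Finset.Icc 1 N, E n - N * μt) / (1 + μt)) := by
            gcongr
            linarith
      _ = _ := by field_simp
  · exact Filter.eventually_map.mpr (Filter.Eventually.of_forall hnonneg)
end

section
/- Let N ≥ 1 be a natural number, R, μ_r, μ_t > 0 with μ_r ≤ R, let S ⊆ {1, …, N} be a finite set of slots with |S| ≤ N·μ_r/R, and let p : ℕ → ℝ with p(n) ≥ 0 for all n ∈ S and ∑_{n∈S} p(n) ≤ N·μ_t. Then (1/N)·∑_{n∈S} log(1 + p(n)) ≤ (μ_r/R)·log(1 + R·μ_t/μ_r). -/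
/-- Finite-horizon form of the upper bound in Lemma 1(b): if the receiver can be on
in at most `N·μr/R` of the first `N` slots and the total transmit energy is at most
`N·μt`, the time-averaged throughput is at most `(μr/R)·log(1 + R·μt/μr)`. -/
theorem stmt_7 (N : ℕ) (hN : 1 ≤ N) (R μr μt : ℝ)
    (hR : 0 < R) (hμr : 0 < μr) (hμt : 0 < μt) (hle : μr ≤ R)
    (S : Finset ℕ) (hSsub : S ⊆ Finset.Icc 1 N)
    (hcard : (S.card : ℝ) ≤ (N : ℝ) * μr / R)
    (p : ℕ → ℝ) (hp : ∀ n ∈ S, 0 ≤ p n)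
    (hsum : ∑ n ∈ S, p n ≤ (N : ℝ) * μt) :
    (1 / (N : ℝ)) * ∑ n ∈ S, Real.log (1 + p n) ≤
      (μr / R) * Real.log (1 + R * μt / μr) := by
  have hN0 : (0 : ℝ) < N := by exact_mod_cast hN
  obtain ⟨c, hc⟩ : ∃ c, c = R * μt / μr := ⟨_, rfl⟩
  have hc0 : 0 < c := by rw [hc]; positivity
  have tangent : ∀ x : ℝ, 0 ≤ x →
      Real.log (1 + x) ≤ Real.log (1 + c) + (x - c) / (1 + c) := by
    intro x hx
    have h := Real.log_le_sub_one_of_pos (show 0 < (1 + x) / (1 + c) by positivity)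
    rw [Real.log_div (by positivity) (by positivity)] at h
    have e : (1 + x) / (1 + c) - 1 = (x - c) / (1 + c) := by
      field_simp
      ring
    linarith
  have h0 := tangent 0 le_rfl
  have hs : ∑ n ∈ S, Real.log (1 + p n) ≤
      ∑ n ∈ S, (Real.log (1 + c) + (0 - c) / (1 + c) + p n / (1 + c)) := by
    refine Finset.sum_le_sum fun n hn => (tangent (p n) (hp n hn)).trans_eq ?_
    ring
  rw [Finset.sum_add_distrib, Finset.sum_const, nsmul_eq_mul, ← Finset.sum_div] at hs
  have h1 : 0 ≤ Real.log (1 + c) + (0 - c) / (1 + c) := by simpa using h0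
  have h2 := mul_le_mul_of_nonneg_right hcard h1
  have h3 : (∑ n ∈ S, p n) / (1 + c) ≤ N * μt / (1 + c) := by gcongr
  have hK : (N : ℝ) * μt = N * μr / R * c := by
    rw [hc]
    field_simp
  rw [hK] at h3
  have h4 : ∑ n ∈ S, Real.log (1 + p n) ≤ N * μr / R * Real.log (1 + c) := by
    refine (hs.trans (add_le_add h2 h3)).trans_eq ?_
    ring
  rw [← hc, one_div, inv_mul_le_iff₀ hN0]
  refine h4.trans_eq ?_
  ring
end

section
/- Let B_max^t, B_max^r ≥ 0, R > 0, and μ_t, μ_r > 0 with μ_r ≤ R. Let E_t, p_t, B_t : ℕ → ℝ and E_r, p_r, B_r : ℕ → ℝ satisfy: E_t(n), E_r(n) ≥ 0; 0 ≤ p_t(n) ≤ B_t(n); p_r(n) ∈ {0, R} and p_r(n) ≤ B_r(n); the battery recursions B_t(n+1) = min(max(0, B_t(n) + E_t(n) − p_t(n)), B_max^t) and B_r(n+1) = min(max(0, B_r(n) + E_r(n) − p_r(n)), B_max^r) for all n ≥ 1; and (1/N)∑_{n=1}^N E_t(n) → μ_t and (1/N)∑_{n=1}^N E_r(n) → μ_r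 as N → ∞. Then liminf_{N→∞} (1/N)·∑_{n=1}^N 1{p_r(n) ≠ 0}·log(1 + p_t(n)) ≤ (μ_r/R)·log(1 + R·μ_t/μ_r). -/
theorem energy_sum_bound (Bm : ℝ) (E p B : ℕ → ℝ)
    (hE : ∀ n, 1 ≤ n → 0 ≤ E n) (hp : ∀ n, 1 ≤ n → 0 ≤ p n ∧ p n ≤ B n)
    (hrec : ∀ n, 1 ≤ n → B (n + 1) = min (max 0 (B n + E n - p n)) Bm) (N : ℕ) :
    ∑ n ∈ Finset.Icc 1 N, p n ≤ B 1 + ∑ n ∈ Finset.Icc 1 N, E n := by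
  have key : ∀ N : ℕ, ∑ n ∈ Finset.Icc 1 N, p n + B (N + 1) ≤
      B 1 + ∑ n ∈ Finset.Icc 1 N, E n := by
    intro N
    induction N with
    | zero => simp
    | succ k ih =>
      rw [Finset.sum_Icc_succ_top (by omega), Finset.sum_Icc_succ_top (by omega)]
      have h1 := hE (k + 1) (by omega)
      have h2 := hp (k + 1) (by omega)
      have h3 : B (k + 1 + 1) ≤ B (k + 1) + E (k + 1) - p (k + 1) := by
        rw [hrec (k + 1) (by omega)]
        exact (min_le_left _ _).trans (max_le (by linarith) le_rfl)
      linarith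
  have h1 := key N
  have h2 := hp (N + 1) (by omega)
  linarith

/-- Per-sample-path form of Lemma 1(b): for a dual energy-harvesting link with an
energy-constrained receiver (`μr ≤ R`), the long-term time-averaged throughput is at
most `(μr/R)·log(1 + R·μt/μr)`. -/
theorem stmt_9 (Bmaxt Bmaxr R μt μr : ℝ)
    (hBmaxt : 0 ≤ Bmaxt) (hBmaxr : 0 ≤ Bmaxr) (hR : 0 < R)
    (hμt : 0 < μt) (hμr : 0 < μr) (hle : μr ≤ R)
    (Et pt Bt Er pr Br : ℕ → ℝ)
    (hEt : ∀ n, 1 ≤ n → 0 ≤ Et n) (hEr : ∀ n, 1 ≤ n → 0 ≤ Er n)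
    (hpt : ∀ n, 1 ≤ n → 0 ≤ pt n ∧ pt n ≤ Bt n)
    (hpr : ∀ n, 1 ≤ n → (pr n = 0 ∨ pr n = R) ∧ pr n ≤ Br n)
    (hrect : ∀ n, 1 ≤ n → Bt (n + 1) = min (max 0 (Bt n + Et n - pt n)) Bmaxt)
    (hrecr : ∀ n, 1 ≤ n → Br (n + 1) = min (max 0 (Br n + Er n - pr n)) Bmaxr)
    (hconvt : Filter.Tendsto
      (fun N : ℕ => (1 / (N : ℝ)) * ∑ n ∈ Finset.Icc 1 N, Et n)
      Filter.atTop (nhds μt))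
    (hconvr : Filter.Tendsto
      (fun N : ℕ => (1 / (N : ℝ)) * ∑ n ∈ Finset.Icc 1 N, Er n)
      Filter.atTop (nhds μr)) :
    Filter.liminf
      (fun N : ℕ => (1 / (N : ℝ)) * ∑ n ∈ Finset.Icc 1 N,
        (if pr n ≠ 0 then Real.log (1 + pt n) else 0))
      Filter.atTop ≤ (μr / R) * Real.log (1 + R * μt / μr) := by
  have hst := energy_sum_bound Bmaxt Et pt Bt hEt hpt hrect
  have hsr := energy_sum_bound Bmaxr Er pr Br hEr
    (fun n hn => ⟨by rcases (hpr n hn).1 with h | h <;> rw [h]; exact hR.le, (hpr n hn).2⟩) hrecr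
  obtain ⟨a, ha⟩ : ∃ a, a = R * μt / μr := ⟨_, rfl⟩
  have ha0 : 0 < a := by rw [ha]; positivity
  have ha1 : 0 < 1 + a := by linarith
  rw [← ha]
  -- tangent line of the logarithm
  have htan : ∀ x : ℝ, 0 ≤ x → Real.log (1 + x) ≤ Real.log (1 + a) - a / (1 + a) + x / (1 + a) := by
    intro x hx
    have h := Real.log_le_sub_one_of_pos (x := (1 + x) / (1 + a)) (by positivity)
    rw [Real.log_div (by linarith) (by linarith)] at h
    have e : (1 + x) / (1 + a) - 1 = x / (1 + a) - a / (1 + a) := by field_simp; ring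
    linarith
  obtain ⟨c, hc⟩ : ∃ c, c = Real.log (1 + a) - a / (1 + a) := ⟨_, rfl⟩
  rw [← hc] at htan
  have hc0 : 0 ≤ c := by have h := htan 0 le_rfl; simpa using h
  have hterm : ∀ n, 1 ≤ n → (if pr n ≠ 0 then Real.log (1 + pt n) else 0) ≤
      c / R * pr n + 1 / (1 + a) * pt n := by
    intro n hn
    have h0 := (hpt n hn).1
    rcases (hpr n hn).1 with h | h
    · simp only [h, ne_eq, not_true_eq_false, if_false, mul_zero, zero_add]
      positivity
    · rw [h, if_pos hR.ne', div_mul_cancel₀ _ hR.ne', one_div_mul_eq_div]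
      exact htan _ h0
  have hbound : ∀ N : ℕ, (1 / (N : ℝ)) * ∑ n ∈ Finset.Icc 1 N,
        (if pr n ≠ 0 then Real.log (1 + pt n) else 0) ≤
      c / R * (1 / (N : ℝ) * Br 1 + (1 / (N : ℝ)) * ∑ n ∈ Finset.Icc 1 N, Er n) +
      1 / (1 + a) * (1 / (N : ℝ) * Bt 1 + (1 / (N : ℝ)) * ∑ n ∈ Finset.Icc 1 N, Et n) := by
    intro N
    have h1 : ∑ n ∈ Finset.Icc 1 N, (if pr n ≠ 0 then Real.log (1 + pt n) else 0) ≤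
        c / R * ∑ n ∈ Finset.Icc 1 N, pr n + 1 / (1 + a) * ∑ n ∈ Finset.Icc 1 N, pt n := by
      rw [Finset.mul_sum, Finset.mul_sum, ← Finset.sum_add_distrib]
      exact Finset.sum_le_sum fun n hn => hterm n (Finset.mem_Icc.1 hn).1
    have h2 := mul_le_mul_of_nonneg_left (hsr N) (div_nonneg hc0 hR.le)
    have h3 := mul_le_mul_of_nonneg_left (hst N) (one_div_pos.2 ha1).le
    have h4 := mul_le_mul_of_nonneg_left (h1.trans (add_le_add h2 h3))
      (show (0 : ℝ) ≤ 1 / (N : ℝ) by positivity)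
    refine h4.trans (le_of_eq ?_)
    ring
  have hlim : Filter.Tendsto (fun N : ℕ =>
      c / R * (1 / (N : ℝ) * Br 1 + (1 / (N : ℝ)) * ∑ n ∈ Finset.Icc 1 N, Er n) +
      1 / (1 + a) * (1 / (N : ℝ) * Bt 1 + (1 / (N : ℝ)) * ∑ n ∈ Finset.Icc 1 N, Et n))
      Filter.atTop (nhds (c / R * (0 * Br 1 + μr) + 1 / (1 + a) * (0 * Bt 1 + μt))) :=
    (((tendsto_one_div_atTop_nhds_zero_nat.mul_const _).add hconvr).const_mul _).add
      (((tendsto_one_div_atTop_nhds_zero_nat.mul_const _).add hconvt).const_mul _)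
  have hval : c / R * (0 * Br 1 + μr) + 1 / (1 + a) * (0 * Bt 1 + μt) =
      μr / R * Real.log (1 + a) := by
    have hμ : μt = μr / R * a := by rw [ha]; field_simp
    rw [hc, hμ]
    ring
  rw [hval] at hlim
  rw [← hlim.liminf_eq]
  refine Filter.liminf_le_liminf (Filter.Eventually.of_forall hbound) ?_ ?_
  · refine Filter.isBoundedUnder_of ⟨0, fun N => ?_⟩
    refine mul_nonneg (by positivity) (Finset.sum_nonneg fun n hn => ?_)
    have h0 := (hpt n (Finset.mem_Icc.1 hn).1).1
    split_ifs
    · exact Real.log_nonneg (by linarith)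
    · exact le_rfl
  · exact hlim.isCoboundedUnder_ge
end
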